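/- arXiv:1502.05732 — 2 statements merged into one kernel-verified Lean document; each statement's English description precedes it below -/
import Mathlib

section
/- Let 1 < p₀, p₁ < ∞, 0 < θ < 1, and define p by 1/p = (1−θ)/p₀ + θ/p₁. For a measurable function f : (0,∞) → ℝ the following are equivalent: (i) C|f| ∈ L^p(0,∞); (ii) there exist measurable f₀, f₁ : (0,∞) → [0,∞) with C f₀ ∈ L^{p₀}(0,∞), C f₁ ∈ L^{p₁}(0,∞), and |f(x)| ≤ f₀(x)^{1−θ} f₁(x)^{θ} for almost every x. (That is, the Calderón product (Ces_{p₀})^{1−θ}(Ces_{p₁})^{θ} equals Ces_p on [0,∞).) -/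
open MeasureTheory Set

/-- The Cesàro operator applied to a nonnegative part: `(1/x)∫_0^x g(t) dt` in `[0,∞]`. -/
noncomputable def cesE (g : ℝ → ℝ) (x : ℝ) : ENNReal :=
  (∫⁻ t in Set.Ioo 0 x, ENNReal.ofReal (g t)) / ENNReal.ofReal x

/-- Membership in the Cesàro space `Ces_p(0,∞)`: `C g ∈ L^p(0,∞)`. -/
def memCes (p : ℝ) (g : ℝ → ℝ) : Prop :=
  (∫⁻ x in Set.Ioi (0:ℝ), cesE g x ^ p) < ⊤


lemma pow_int_Ioo {r x : ℝ} (hr : -1 < r) (hx : 0 < x) :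
    ∫⁻ t in Ioo 0 x, ENNReal.ofReal (t ^ r) = ENNReal.ofReal (x ^ (r+1) / (r+1)) := by
  have h1 : IntervalIntegrable (fun t : ℝ => t ^ r) volume 0 x :=
    intervalIntegral.intervalIntegrable_rpow' hr
  have h2 := integral_rpow (a := 0) (b := x) (Or.inl hr)
  rw [Real.zero_rpow (by linarith), sub_zero, intervalIntegral.integral_of_le hx.le] at h2
  rw [← h2, ofReal_integral_eq_lintegral_ofReal h1.1, setLIntegral_congr Ioo_ae_eq_Ioc]
  filter_upwards [ae_restrict_mem measurableSet_Ioc] with t ht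
  exact Real.rpow_nonneg ht.1.le _

lemma pow_int_Ioi {a c : ℝ} (ha : a < -1) (hc : 0 < c) :
    ∫⁻ t in Ioi c, ENNReal.ofReal (t ^ a) = ENNReal.ofReal (-c ^ (a+1) / (a+1)) := by
  rw [← integral_Ioi_rpow_of_lt ha hc,
    ofReal_integral_eq_lintegral_ofReal (integrableOn_Ioi_rpow_of_lt ha hc)]
  filter_upwards [ae_restrict_mem measurableSet_Ioi] with t ht
  exact Real.rpow_nonneg (hc.trans ht).le _

lemma pow_split {α t x : ℝ} (hα : 0 ≤ α) (ht : 0 < t) (hx : t < x) :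
    ENNReal.ofReal (t ^ (-α)) ≤ ENNReal.ofReal (x ^ (-α)) +
      ENNReal.ofReal α * ∫⁻ s in Ioo t x, ENNReal.ofReal (s ^ (-α - 1)) := by
  rcases hα.eq_or_lt with rfl | hα
  · simp
  have h0 : (0:ℝ) ∉ uIcc t x := by
    rw [uIcc_of_le hx.le]; intro h; linarith [h.1]
  have h1 : IntervalIntegrable (fun t : ℝ => t ^ (-α-1)) volume t x :=
    intervalIntegral.intervalIntegrable_rpow (Or.inr h0)
  have h2 := integral_rpow (a := t) (b := x) (r := -α-1) (Or.inr ⟨by linarith, h0⟩)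
  rw [intervalIntegral.integral_of_le hx.le] at h2
  rw [setLIntegral_congr Ioo_ae_eq_Ioc, ← ofReal_integral_eq_lintegral_ofReal h1.1, h2,
    ← ENNReal.ofReal_mul hα.le, ← ENNReal.ofReal_add (Real.rpow_nonneg (ht.trans hx).le _)]
  · apply ENNReal.ofReal_le_ofReal
    have : -α - 1 + 1 = -α := by ring
    rw [this]
    apply le_of_eq
    field_simp
    ring
  · have : -α - 1 + 1 = -α := by ring
    rw [this]
    have h3 : x ^ (-α) ≤ t ^ (-α) := Real.rpow_le_rpow_of_nonpos ht hx.le (by linarith)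
    refine mul_nonneg hα.le (div_nonneg_of_nonpos (by linarith) (by linarith))
  · filter_upwards [ae_restrict_mem measurableSet_Ioc] with s hs
    exact Real.rpow_nonneg (ht.trans hs.1).le _

lemma tri {k h : ℝ → ENNReal} (hk : Measurable k) (hh : Measurable h) :
    ∫⁻ x in Ioi (0:ℝ), k x * ∫⁻ t in Ioo 0 x, h t =
      ∫⁻ t in Ioi (0:ℝ), h t * ∫⁻ x in Ioi t, k x := by
  have e1 : ∀ x ∈ Ioi (0:ℝ), k x * ∫⁻ t in Ioo 0 x, h t =
      ∫⁻ t in Ioi (0:ℝ), {z : ℝ × ℝ | z.2 < z.1}.indicator (fun z => k z.1 * h z.2) (x, t) := by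
    intro x hx
    rw [← lintegral_const_mul _ hh, ← Ioi_inter_Iio, inter_comm,
      ← Measure.restrict_restrict measurableSet_Iio, ← lintegral_indicator measurableSet_Iio]
    rfl
  have e2 : ∀ t ∈ Ioi (0:ℝ), h t * ∫⁻ x in Ioi t, k x =
      ∫⁻ x in Ioi (0:ℝ), {z : ℝ × ℝ | z.2 < z.1}.indicator (fun z => k z.1 * h z.2) (x, t) := by
    intro t ht
    have : Ioi t = Ioi t ∩ Ioi 0 := by
      ext y; simp only [mem_Ioi, mem_inter_iff] at *; constructor
      · intro h; exact ⟨h, ht.trans h⟩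
      · exact fun h => h.1
    rw [← lintegral_const_mul _ hk, this,
      ← Measure.restrict_restrict measurableSet_Ioi, ← lintegral_indicator measurableSet_Ioi]
    congr 1; ext x
    simp only [indicator, mem_Ioi, mem_ofPred_eq, mul_comm]
  rw [setLIntegral_congr_fun measurableSet_Ioi e1, setLIntegral_congr_fun measurableSet_Ioi e2]
  apply lintegral_lintegral_swap
  apply Measurable.aemeasurable
  exact ((hk.comp measurable_fst).mul (hh.comp measurable_snd)).indicator
    (measurableSet_lt measurable_snd measurable_fst)

/-- Hardy's inequality. -/
lemma hardy {q : ℝ} (hq : 1 < q) {g : ℝ → ENNReal} (hg : Measurable g)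
    (hfin : ∫⁻ x in Ioi (0:ℝ), g x ^ q < ⊤) :
    ∫⁻ x in Ioi (0:ℝ), ((∫⁻ t in Ioo 0 x, g t) / ENNReal.ofReal x) ^ q < ⊤ := by
  obtain ⟨b, hb⟩ : ∃ b, b = 1 - 1/q := ⟨_, rfl⟩
  have hq0 : 0 < q := by linarith
  have hb0 : 0 < b := by
    rw [hb, sub_pos, div_lt_one hq0]; exact hq
  have hqb : q * b = q - 1 := by rw [hb]; field_simp
  have hqb' : 1/q = 1 - b := by rw [hb]; ring
  have key : ∀ x ∈ Ioi (0:ℝ), ((∫⁻ t in Ioo 0 x, g t) / ENNReal.ofReal x) ^ q ≤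
      ENNReal.ofReal (b ^ (-(q-1))) * (ENNReal.ofReal (x ^ (-1-b)) *
        ∫⁻ t in Ioo 0 x, g t ^ q * ENNReal.ofReal (t ^ b)) := by
    intro x hx
    have hx : 0 < x := hx
    have h1 : ∫⁻ t in Ioo 0 x, g t ≤ (∫⁻ t in Ioo 0 x, g t ^ q * ENNReal.ofReal (t ^ b)) ^ (1/q) *
        (ENNReal.ofReal (x ^ b / b)) ^ b := by
      have h2 := ENNReal.lintegral_mul_norm_pow_le (μ := volume.restrict (Ioo 0 x))
        (f := fun t => g t ^ q * ENNReal.ofReal (t ^ b))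
        (g := fun t => ENNReal.ofReal (t ^ (-(1/q)))) (by fun_prop) (by fun_prop)
        (p := 1/q) (q := b) (by positivity) hb0.le (by rw [hb]; ring)
      rw [pow_int_Ioo (by rw [hqb']; linarith) hx] at h2
      have e : -(1/q) + 1 = b := by rw [hb]; ring
      rw [e] at h2
      refine le_trans (le_of_eq ?_) h2
      apply setLIntegral_congr_fun measurableSet_Ioo
      intro t ht
      have ht0 : 0 < t := ht.1
      show g t = (g t ^ q * ENNReal.ofReal (t ^ b)) ^ (1/q) * ENNReal.ofReal (t ^ (-(1/q))) ^ b
      rw [ENNReal.mul_rpow_of_nonneg _ _ (by positivity), ← ENNReal.rpow_mul,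
        mul_one_div_cancel hq0.ne', ENNReal.rpow_one,
        ENNReal.ofReal_rpow_of_pos (by positivity), ENNReal.ofReal_rpow_of_pos (by positivity),
        mul_assoc, ← ENNReal.ofReal_mul (by positivity), ← Real.rpow_mul ht0.le,
        ← Real.rpow_mul ht0.le, ← Real.rpow_add ht0]
      have : b * (1/q) + -(1/q) * b = 0 := by ring
      rw [this]; simp
    calc _ ≤ (((∫⁻ t in Ioo 0 x, g t ^ q * ENNReal.ofReal (t ^ b)) ^ (1/q) *
        (ENNReal.ofReal (x ^ b / b)) ^ b) / ENNReal.ofReal x) ^ q := by gcongr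
      _ = _ := by
        rw [div_eq_mul_inv, mul_assoc, ENNReal.mul_rpow_of_nonneg _ _ hq0.le, ← ENNReal.rpow_mul,
          one_div_mul_cancel hq0.ne', ENNReal.rpow_one, mul_comm, ← mul_assoc]
        congr 1
        rw [ENNReal.ofReal_rpow_of_pos (by positivity), ← ENNReal.ofReal_inv_of_pos hx,
          ← ENNReal.ofReal_mul (by positivity), ← ENNReal.ofReal_mul (by positivity),
          ENNReal.ofReal_rpow_of_pos (by positivity)]
        congr 1
        rw [Real.mul_rpow (by positivity) (by positivity), ← Real.rpow_mul (by positivity),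
          Real.div_rpow (by positivity) (by positivity), mul_comm b q, hqb,
          ← Real.rpow_neg_one x, ← Real.rpow_mul hx.le, ← Real.rpow_mul hx.le, Real.rpow_neg hb0.le,
          div_mul_eq_mul_div, ← Real.rpow_add hx]
        have : b * (q-1) + -1 * q = -1 - b := by linarith
        rw [this]; field_simp
  refine lt_of_le_of_lt (setLIntegral_mono' measurableSet_Ioi key) ?_
  rw [lintegral_const_mul' _ _ ENNReal.ofReal_ne_top, tri (by fun_prop) (by fun_prop)]
  refine ENNReal.mul_lt_top ENNReal.ofReal_lt_top ?_
  have e : ∀ t ∈ Ioi (0:ℝ), g t ^ q * ENNReal.ofReal (t ^ b) * ∫⁻ x in Ioi t, ENNReal.ofReal (x ^ (-1-b))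
      = g t ^ q * ENNReal.ofReal (1/b) := by
    intro t ht
    have ht : 0 < t := ht
    rw [pow_int_Ioi (by linarith) ht, mul_assoc, ← ENNReal.ofReal_mul (by positivity)]
    congr 2
    have : -1 - b + 1 = -b := by ring
    rw [this, Real.rpow_neg ht.le]; field_simp
  rw [setLIntegral_congr_fun measurableSet_Ioi e, lintegral_mul_const' _ _ ENNReal.ofReal_ne_top]
  exact ENNReal.mul_lt_top hfin ENNReal.ofReal_lt_top

noncomputable def cG (φ : ℝ → ENNReal) (x : ℝ) : ENNReal := ∫⁻ t in Ioo 0 x, φ t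

lemma cG_mono (φ : ℝ → ENNReal) : Monotone (cG φ) := fun _ _ h =>
  lintegral_mono_set (Ioo_subset_Ioo_right h)

lemma cG_meas (φ : ℝ → ENNReal) : Measurable (cG φ) := (cG_mono φ).measurable

lemma level (φ : ℝ → ENNReal) (x : ℝ) (s : ENNReal) :
    ∫⁻ t in {t | t ∈ Ioo 0 x ∧ cG φ t ≤ s}, φ t ≤ s := by
  rcases Set.eq_empty_or_nonempty {t | t ∈ Ioo 0 x ∧ cG φ t ≤ s} with h | h
  · rw [h]; simp
  have hbdd : BddAbove {t | t ∈ Ioo 0 x ∧ cG φ t ≤ s} := ⟨x, fun t ht => ht.1.2.le⟩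
  have hl := isLUB_csSup h hbdd
  set a := sSup {t | t ∈ Ioo 0 x ∧ cG φ t ≤ s}
  obtain ⟨u, hu1, hu2, hu3, hu4⟩ := hl.exists_seq_monotone_tendsto h
  have hsub : {t | t ∈ Ioo 0 x ∧ cG φ t ≤ s} ⊆ Ioc 0 a := fun t ht => ⟨ht.1.1, hl.1 ht⟩
  have hsub2 : Ioo 0 a ⊆ ⋃ n, Ioo 0 (u n) := by
    intro t ht
    obtain ⟨n, hn⟩ := (hu3.eventually (lt_mem_nhds ht.2)).exists
    exact mem_iUnion.2 ⟨n, ht.1, hn⟩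
  calc _ ≤ ∫⁻ t in Ioc 0 a, φ t := lintegral_mono_set hsub
    _ = ∫⁻ t in Ioo 0 a, φ t := setLIntegral_congr Ioo_ae_eq_Ioc.symm
    _ ≤ ∫⁻ t in ⋃ n, Ioo 0 (u n), φ t := lintegral_mono_set hsub2
    _ = ⨆ n, ∫⁻ t in Ioo 0 (u n), φ t := by
      apply setLIntegral_iUnion_of_directed
      apply Monotone.directed_le
      exact fun i j hij => Ioo_subset_Ioo_right (hu1 hij)
    _ ≤ s := iSup_le fun n => (hu4 n).2

lemma zero_ae {φ : ℝ → ENNReal} (hφ : Measurable φ) :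
    ∀ᵐ t ∂(volume.restrict (Ioi (0:ℝ))), cG φ t = 0 → φ t = 0 := by
  have h : ∀ n : ℕ, ∀ᵐ t : ℝ, t ∈ Ioo (0:ℝ) n ∧ cG φ t ≤ 0 → φ t = 0 := by
    intro n
    have hm : MeasurableSet {t | t ∈ Ioo (0:ℝ) n ∧ cG φ t ≤ 0} :=
      measurableSet_Ioo.inter (measurableSet_le (cG_meas φ) measurable_const)
    have := level φ n 0
    rw [nonpos_iff_eq_zero, setLIntegral_eq_zero_iff hm hφ] at this
    exact this
  rw [ae_restrict_iff' measurableSet_Ioi]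
  filter_upwards [ae_all_iff.2 h] with t ht h0 hG
  obtain ⟨n, hn⟩ := exists_nat_gt t
  exact ht n ⟨⟨h0, hn⟩, hG.le⟩

lemma lemA {φ : ℝ → ENNReal} (hφ : Measurable φ) {β x : ℝ} (hβ : 0 < β) (hβ1 : β < 1)
    (hfin : cG φ x ≠ ⊤) :
    ∫⁻ t in Ioo 0 x, φ t * ENNReal.ofReal ((cG φ t).toReal ^ (-β)) ≤
      ENNReal.ofReal (1/(1-β)) * (cG φ x) ^ (1-β) := by
  have hG := cG_meas φ
  by_cases h0 : cG φ x = 0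
  · have : ∀ᵐ t ∂(volume.restrict (Ioo 0 x)), φ t = 0 := by
      have := (lintegral_eq_zero_iff hφ).1 h0
      exact this
    rw [lintegral_congr_ae (g := fun _ => 0) (by filter_upwards [this] with t ht; simp [ht])]
    simp
  obtain ⟨m, hm⟩ : ∃ m, m = (cG φ x).toReal := ⟨_, rfl⟩
  have hm0 : 0 < m := hm ▸ ENNReal.toReal_pos h0 hfin
  have hM : cG φ x = ENNReal.ofReal m := by rw [hm, ENNReal.ofReal_toReal hfin]
  set μ := (volume.restrict (Ioo 0 x)).withDensity φ with hμ
  have e1 : ∫⁻ t in Ioo 0 x, φ t * ENNReal.ofReal ((cG φ t).toReal ^ (-β)) =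
      ∫⁻ t, ENNReal.ofReal (((cG φ t).toReal⁻¹) ^ β) ∂μ := by
    rw [hμ, lintegral_withDensity_eq_lintegral_mul _ hφ (by fun_prop)]
    apply lintegral_congr
    intro t
    simp only [Pi.mul_apply]
    rw [Real.inv_rpow ENNReal.toReal_nonneg, Real.rpow_neg ENNReal.toReal_nonneg]
  rw [e1, lintegral_rpow_eq_lintegral_meas_lt_mul μ
    (Filter.Eventually.of_forall fun t => inv_nonneg.2 ENNReal.toReal_nonneg) (by fun_prop) hβ]
  have b1 : ∀ A, μ A ≤ ENNReal.ofReal m := by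
    intro A
    refine (measure_mono (subset_univ A)).trans ?_
    rw [hμ, withDensity_apply _ MeasurableSet.univ, Measure.restrict_univ, ← hM]
    exact le_rfl
  have b2 : ∀ s : ℝ, 0 < s → μ {a | s < (cG φ a).toReal⁻¹} ≤ ENNReal.ofReal (s⁻¹) := by
    intro s hs
    have hms : MeasurableSet {a | s < (cG φ a).toReal⁻¹} :=
      measurableSet_lt measurable_const (by fun_prop)
    rw [hμ, withDensity_apply _ hms, Measure.restrict_restrict hms]
    refine le_trans (lintegral_mono_set ?_) (level φ x _)
    rintro t ⟨ht1, ht2⟩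
    refine ⟨ht2, ?_⟩
    have hne : cG φ t ≠ ⊤ := ne_top_of_le_ne_top hfin (cG_mono φ ht2.2.le)
    rw [← ENNReal.ofReal_toReal hne]
    apply ENNReal.ofReal_le_ofReal
    have ht1 : s < (cG φ t).toReal⁻¹ := ht1
    have := inv_anti₀ hs ht1.le
    rwa [inv_inv] at this
  have hmi : 0 < m⁻¹ := inv_pos.2 hm0
  have hun : Ioi (0:ℝ) = Ioc 0 m⁻¹ ∪ Ioi m⁻¹ := (Ioc_union_Ioi_eq_Ioi hmi.le).symm
  rw [hun, lintegral_union measurableSet_Ioi (by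
    rw [Set.disjoint_left]; intro a ha hb; exact absurd ha.2 (not_le.2 hb))]
  have c1 : ∫⁻ t in Ioc 0 m⁻¹, μ {a | t < (cG φ a).toReal⁻¹} * ENNReal.ofReal (t ^ (β-1)) ≤
      ENNReal.ofReal (m ^ (1-β) / β) := by
    calc _ ≤ ∫⁻ t in Ioc 0 m⁻¹, ENNReal.ofReal m * ENNReal.ofReal (t ^ (β-1)) := by
          apply lintegral_mono; intro t; dsimp only; gcongr; exact b1 _
      _ = _ := by
        rw [lintegral_const_mul' _ _ ENNReal.ofReal_ne_top, setLIntegral_congr Ioo_ae_eq_Ioc.symm,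
          pow_int_Ioo (by linarith) hmi, ← ENNReal.ofReal_mul hm0.le]
        congr 1
        rw [sub_add_cancel, Real.inv_rpow hm0.le, Real.rpow_sub hm0, Real.rpow_one]
        field_simp
  have c2 : ∫⁻ t in Ioi m⁻¹, μ {a | t < (cG φ a).toReal⁻¹} * ENNReal.ofReal (t ^ (β-1)) ≤
      ENNReal.ofReal (m ^ (1-β) / (1-β)) := by
    calc _ ≤ ∫⁻ t in Ioi m⁻¹, ENNReal.ofReal (t ^ (β-2)) := by
          apply setLIntegral_mono' measurableSet_Ioi; intro t ht
          have ht0 : 0 < t := hmi.trans ht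
          calc _ ≤ ENNReal.ofReal (t⁻¹) * ENNReal.ofReal (t ^ (β-1)) := by
                gcongr; exact b2 t ht0
            _ = _ := by
              rw [← ENNReal.ofReal_mul (by positivity), ← Real.rpow_neg_one t, ← Real.rpow_add ht0]
              congr 2; ring
      _ = _ := by
        rw [pow_int_Ioi (by linarith) hmi]
        congr 1
        have : β - 2 + 1 = -(1-β) := by ring
        rw [this, Real.inv_rpow hm0.le, Real.rpow_neg hm0.le, inv_inv, neg_div_neg_eq]
  calc _ ≤ ENNReal.ofReal β * (ENNReal.ofReal (m ^ (1-β) / β) + ENNReal.ofReal (m ^ (1-β) / (1-β))) := by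
        gcongr
    _ = _ := by
      have : 0 < 1 - β := by linarith
      rw [hM, ENNReal.ofReal_rpow_of_pos hm0, ← ENNReal.ofReal_add (by positivity) (by positivity),
        ← ENNReal.ofReal_mul hβ.le, ← ENNReal.ofReal_mul (by positivity)]
      congr 1
      field_simp; ring

/-- pointwise bound, negative exponent -/
lemma ptA {φ : ℝ → ENNReal} (hφ : Measurable φ) {β x : ℝ} (hβ : 0 < β) (hβ1 : β < 1) (hx : 0 < x)
    (hfin : cG φ x ≠ ⊤) :
    (∫⁻ t in Ioo 0 x, φ t * ENNReal.ofReal ((cG φ t / ENNReal.ofReal t).toReal ^ (-β))) /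
      ENNReal.ofReal x ≤
      ENNReal.ofReal (1/(1-β)) * (cG φ x / ENNReal.ofReal x) ^ (1-β) := by
  have h1 : ∫⁻ t in Ioo 0 x, φ t * ENNReal.ofReal ((cG φ t / ENNReal.ofReal t).toReal ^ (-β)) ≤
      (∫⁻ t in Ioo 0 x, φ t * ENNReal.ofReal ((cG φ t).toReal ^ (-β))) * ENNReal.ofReal (x ^ β) := by
    rw [← lintegral_mul_const' _ _ ENNReal.ofReal_ne_top]
    apply setLIntegral_mono' measurableSet_Ioo
    intro t ht
    have ht0 : 0 < t := ht.1
    rw [mul_assoc, ← ENNReal.ofReal_mul (by positivity)]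
    gcongr
    rw [ENNReal.toReal_div, ENNReal.toReal_ofReal ht0.le,
      Real.div_rpow ENNReal.toReal_nonneg ht0.le, Real.rpow_neg ht0.le, div_inv_eq_mul]
    gcongr
    exact ht.2.le
  calc _ ≤ (ENNReal.ofReal (1/(1-β)) * (cG φ x) ^ (1-β)) * ENNReal.ofReal (x ^ β) / ENNReal.ofReal x := by
        gcongr
        refine h1.trans ?_
        gcongr
        exact lemA hφ hβ hβ1 hfin
    _ = _ := by
      rw [ENNReal.div_rpow_of_nonneg _ _ (by linarith), ENNReal.ofReal_rpow_of_pos hx,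
        div_eq_mul_inv, div_eq_mul_inv, div_eq_mul_inv, ← ENNReal.ofReal_inv_of_pos hx,
        ← ENNReal.ofReal_inv_of_pos (by positivity), mul_assoc, mul_assoc,
        ← ENNReal.ofReal_mul (by positivity)]
      congr 3
      rw [Real.rpow_sub hx, Real.rpow_one]; field_simp

lemma ptB {φ : ℝ → ENNReal} (hφ : Measurable φ) {α x : ℝ} (hα : 0 ≤ α) (hx : 0 < x) :
    (∫⁻ t in Ioo 0 x, φ t * (cG φ t / ENNReal.ofReal t) ^ α) / ENNReal.ofReal x ≤
      (cG φ x / ENNReal.ofReal x) ^ (1+α) +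
      ENNReal.ofReal α * ((∫⁻ t in Ioo 0 x, (cG φ t / ENNReal.ofReal t) ^ (1+α)) /
        ENNReal.ofReal x) := by
  have hG := cG_meas φ
  have hdiv : ∀ t : ℝ, 0 < t → ∀ γ : ℝ, 0 ≤ γ → ∀ a : ENNReal, (a / ENNReal.ofReal t) ^ γ =
      a ^ γ * ENNReal.ofReal (t ^ (-γ)) := by
    intro t ht γ hγ a
    rw [ENNReal.div_rpow_of_nonneg _ _ hγ, ENNReal.ofReal_rpow_of_pos ht, div_eq_mul_inv,
      ← ENNReal.ofReal_inv_of_pos (by positivity), Real.rpow_neg ht.le]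
  have inner : ∀ s, ∫⁻ t in Ioo 0 s, φ t * cG φ t ^ α ≤ cG φ s ^ (1+α) := by
    intro s
    calc _ ≤ ∫⁻ t in Ioo 0 s, φ t * cG φ s ^ α := by
          apply setLIntegral_mono' measurableSet_Ioo
          intro t ht
          gcongr
          exact cG_mono φ ht.2.le
      _ = _ := by
        rw [lintegral_mul_const _ hφ, ENNReal.rpow_add_of_nonneg _ _ zero_le_one hα,
          ENNReal.rpow_one]; rfl
  have step : ∫⁻ t in Ioo 0 x, φ t * (cG φ t / ENNReal.ofReal t) ^ α ≤
      cG φ x ^ (1+α) * ENNReal.ofReal (x ^ (-α)) +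
      ENNReal.ofReal α * ∫⁻ t in Ioo 0 x, (cG φ t / ENNReal.ofReal t) ^ (1+α) := by
    calc _ ≤ ∫⁻ t in Ioo 0 x, (φ t * cG φ t ^ α * ENNReal.ofReal (x ^ (-α)) +
          ENNReal.ofReal α * (φ t * cG φ t ^ α *
            ∫⁻ s in Ioi t, (Iio x).indicator (fun s => ENNReal.ofReal (s ^ (-α-1))) s)) := by
          apply setLIntegral_mono' measurableSet_Ioo
          intro t ht
          rw [hdiv t ht.1 α hα, lintegral_indicator measurableSet_Iio,
            Measure.restrict_restrict measurableSet_Iio, inter_comm, Ioi_inter_Iio, ← mul_assoc]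
          refine (mul_le_mul_right (pow_split hα ht.1 ht.2) _).trans (le_of_eq ?_)
          ring
      _ = (∫⁻ t in Ioo 0 x, φ t * cG φ t ^ α) * ENNReal.ofReal (x ^ (-α)) +
          ENNReal.ofReal α * ∫⁻ t in Ioo 0 x, (φ t * cG φ t ^ α *
            ∫⁻ s in Ioi t, (Iio x).indicator (fun s => ENNReal.ofReal (s ^ (-α-1))) s) := by
          rw [lintegral_add_left (by fun_prop), lintegral_mul_const' _ _ ENNReal.ofReal_ne_top,
            lintegral_const_mul' _ _ ENNReal.ofReal_ne_top]
      _ ≤ _ := by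
          gcongr ?_ * _ + _ * ?_
          · exact inner x
          calc _ ≤ ∫⁻ t in Ioi 0, (φ t * cG φ t ^ α *
                ∫⁻ s in Ioi t, (Iio x).indicator (fun s => ENNReal.ofReal (s ^ (-α-1))) s) :=
                lintegral_mono_set Ioo_subset_Ioi_self
            _ = ∫⁻ s in Ioi 0, (Iio x).indicator (fun s => ENNReal.ofReal (s ^ (-α-1))) s *
                ∫⁻ t in Ioo 0 s, φ t * cG φ t ^ α := by
                rw [tri (Measurable.indicator (by fun_prop) measurableSet_Iio) (by fun_prop)]
            _ = ∫⁻ s in Ioi 0, (Iio x).indicator (fun s => ENNReal.ofReal (s ^ (-α-1)) *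
                ∫⁻ t in Ioo 0 s, φ t * cG φ t ^ α) s := by
                congr 1; ext s; by_cases hs : s ∈ Iio x <;> simp [hs]
            _ = ∫⁻ s in Ioo 0 x, ENNReal.ofReal (s ^ (-α-1)) *
                ∫⁻ t in Ioo 0 s, φ t * cG φ t ^ α := by
                rw [lintegral_indicator measurableSet_Iio,
                  Measure.restrict_restrict measurableSet_Iio, inter_comm, Ioi_inter_Iio]
            _ ≤ _ := by
                apply setLIntegral_mono' measurableSet_Ioo
                intro s hs
                rw [hdiv s hs.1 _ (by linarith), mul_comm]
                have : -α-1 = -(1+α) := by ring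
                rw [this]
                gcongr
                exact inner s
  calc _ ≤ (cG φ x ^ (1+α) * ENNReal.ofReal (x ^ (-α)) +
      ENNReal.ofReal α * ∫⁻ t in Ioo 0 x, (cG φ t / ENNReal.ofReal t) ^ (1+α)) / ENNReal.ofReal x := by
        gcongr
    _ = _ := by
      rw [ENNReal.add_div, mul_div_assoc, mul_div_assoc, hdiv x hx _ (by linarith)]
      congr 2
      rw [div_eq_mul_inv, ← ENNReal.ofReal_inv_of_pos hx, ← ENNReal.ofReal_mul (by positivity),
        ← Real.rpow_neg_one x, ← Real.rpow_add hx]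
      congr 2; ring

lemma cesE_eq (g : ℝ → ℝ) (x : ℝ) :
    cesE g x = cG (fun t => ENNReal.ofReal (g t)) x / ENNReal.ofReal x := rfl

lemma cesE_meas (g : ℝ → ℝ) : Measurable (cesE g) := by
  have := cG_meas (fun t => ENNReal.ofReal (g t))
  have h : cesE g = fun x => cG (fun t => ENNReal.ofReal (g t)) x / ENNReal.ofReal x := rfl
  rw [h]; fun_prop

lemma cG_fin {p : ℝ} (hp : 0 < p) {g : ℝ → ℝ} (h : memCes p g) (x : ℝ) :
    cG (fun t => ENNReal.ofReal (g t)) x ≠ ⊤ := by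
  intro hx
  have h' : (∫⁻ x in Ioi (0:ℝ), cesE g x ^ p) < ⊤ := h
  refine h'.ne (top_le_iff.1 ?_)
  calc (⊤ : ENNReal) = ∫⁻ y in Ioi (max x 0), ⊤ := by simp
    _ ≤ ∫⁻ y in Ioi (max x 0), cesE g y ^ p := by
      apply setLIntegral_mono' measurableSet_Ioi
      intro y hy
      have hy1 : x < y := (le_max_left _ _).trans_lt hy
      have : cG (fun t => ENNReal.ofReal (g t)) y = ⊤ :=
        top_le_iff.1 (hx ▸ cG_mono _ hy1.le)
      rw [cesE_eq, this, ENNReal.top_div_of_ne_top ENNReal.ofReal_ne_top, ENNReal.top_rpow_of_pos hp]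
    _ ≤ _ := lintegral_mono_set (Ioi_subset_Ioi (le_max_right _ _))

lemma ofReal_toReal_rpow_le {a : ENNReal} {α : ℝ} (hα : 0 ≤ α) :
    ENNReal.ofReal (a.toReal ^ α) ≤ a ^ α := by
  rw [← ENNReal.ofReal_rpow_of_nonneg ENNReal.toReal_nonneg hα]
  gcongr
  exact ENNReal.ofReal_toReal_le

lemma core {p q : ℝ} (hp : 0 < p) (hq : 1 < q) {f : ℝ → ℝ} (hf : Measurable f)
    (hf0 : ∀ t, 0 ≤ f t) (h : memCes p f) :
    memCes q (fun t => f t * (cesE f t).toReal ^ (p/q - 1)) := by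
  have hq0 : 0 < q := by linarith
  obtain ⟨α, hα⟩ : ∃ α, α = p/q - 1 := ⟨_, rfl⟩
  have hα1 : -1 < α := by
    have : 0 < p/q := by positivity
    linarith
  have hαp : (1 + α) * q = p := by rw [hα]; field_simp; ring
  have hfin := cG_fin hp h
  have hφ : Measurable (fun t => ENNReal.ofReal (f t)) := by fun_prop
  have hF := cesE_meas f
  have h' : (∫⁻ x in Ioi (0:ℝ), cesE f x ^ p) < ⊤ := h
  rw [← hα]
  unfold memCes
  rcases lt_or_ge α 0 with hneg | hpos
  · have key : ∀ x ∈ Ioi (0:ℝ), cesE (fun t => f t * (cesE f t).toReal ^ α) x ^ q ≤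
        ENNReal.ofReal (1/(1+α)) ^ q * cesE f x ^ p := by
      intro x hx
      have := ptA hφ (β := -α) (by linarith) (by linarith) hx (hfin x)
      rw [neg_neg, sub_neg_eq_add] at this
      rw [← hαp, ENNReal.rpow_mul, ← ENNReal.mul_rpow_of_nonneg _ _ hq0.le]
      gcongr
      refine le_trans (le_of_eq ?_) this
      unfold cesE
      congr 1
      apply lintegral_congr
      intro t
      rw [ENNReal.ofReal_mul (hf0 t)]
      rfl
    refine lt_of_le_of_lt (setLIntegral_mono' measurableSet_Ioi key) ?_
    have hc : ENNReal.ofReal (1/(1+α)) ^ q ≠ ⊤ :=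
      ENNReal.rpow_ne_top_of_nonneg hq0.le ENNReal.ofReal_ne_top
    rw [lintegral_const_mul' _ _ hc]
    exact ENNReal.mul_lt_top hc.lt_top h'
  · have hΨ : ∀ x, (cesE f x ^ (1+α)) ^ q = cesE f x ^ p := by
      intro x; rw [← ENNReal.rpow_mul, hαp]
    have hH := hardy hq (g := fun x => cesE f x ^ (1+α)) (by fun_prop) (by simpa only [hΨ] using h')
    have key : ∀ x ∈ Ioi (0:ℝ), cesE (fun t => f t * (cesE f t).toReal ^ α) x ^ q ≤
        2 ^ (q-1) * (cesE f x ^ p + ENNReal.ofReal α ^ q *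
          ((∫⁻ t in Ioo 0 x, cesE f t ^ (1+α)) / ENNReal.ofReal x) ^ q) := by
      intro x hx
      have := ptB hφ hpos hx
      rw [← hΨ, ← ENNReal.mul_rpow_of_nonneg _ _ hq0.le]
      refine le_trans ?_ (ENNReal.rpow_add_le_mul_rpow_add_rpow _ _ hq.le)
      gcongr
      refine le_trans ?_ this
      unfold cesE
      gcongr with t
      rw [ENNReal.ofReal_mul (hf0 t)]
      gcongr
      exact ofReal_toReal_rpow_le hpos
    refine lt_of_le_of_lt (setLIntegral_mono' measurableSet_Ioi key) ?_
    have hc : ENNReal.ofReal α ^ q ≠ ⊤ :=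
      ENNReal.rpow_ne_top_of_nonneg hq0.le ENNReal.ofReal_ne_top
    have hc2 : (2:ENNReal) ^ (q-1) ≠ ⊤ :=
      ENNReal.rpow_ne_top_of_nonneg (by linarith) (by simp)
    rw [lintegral_const_mul' _ _ hc2, lintegral_add_left (by fun_prop), lintegral_const_mul' _ _ hc]
    exact ENNReal.mul_lt_top hc2.lt_top (ENNReal.add_lt_top.2 ⟨h', ENNReal.mul_lt_top hc.lt_top hH⟩)

/-- `(Ces_{p₀})^{1−θ}(Ces_{p₁})^{θ} = Ces_p` on `[0,∞)` for `1 < p₀, p₁ < ∞`, `0 < θ < 1`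
and `1/p = (1−θ)/p₀ + θ/p₁`: `C|f| ∈ L^p` iff `|f| ≤ f₀^{1−θ} f₁^{θ}` a.e. on `(0,∞)`
for some nonnegative measurable `f₀, f₁` with `Cf₀ ∈ L^{p₀}`, `Cf₁ ∈ L^{p₁}`. -/
theorem stmt10 (p₀ p₁ θ p : ℝ) (hp₀ : 1 < p₀) (hp₁ : 1 < p₁) (hθ0 : 0 < θ) (hθ1 : θ < 1)
    (hp : 1 / p = (1 - θ) / p₀ + θ / p₁)
    (f : ℝ → ℝ) (hf : Measurable f) :
    memCes p (fun t => |f t|) ↔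
      ∃ f₀ f₁ : ℝ → ℝ, Measurable f₀ ∧ Measurable f₁ ∧
        (∀ t, 0 ≤ f₀ t) ∧ (∀ t, 0 ≤ f₁ t) ∧
        memCes p₀ f₀ ∧ memCes p₁ f₁ ∧
        (∀ᵐ x ∂(MeasureTheory.volume.restrict (Set.Ioi (0:ℝ))),
          |f x| ≤ f₀ x ^ (1 - θ) * f₁ x ^ θ) := by
  have h0 : 0 < p₀ := by linarith
  have h1 : 0 < p₁ := by linarith
  have hθ' : 0 < 1 - θ := by linarith
  have hpp : 0 < p := by
    have : 0 < 1 / p := by rw [hp]; positivity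
    exact one_div_pos.1 this
  have hsum : (1-θ) * (p/p₀) + θ * (p/p₁) = 1 := by
    have : p * (1/p) = 1 := by field_simp
    rw [hp] at this
    linear_combination this
  constructor
  · intro h
    have hF := cesE_meas (fun t => |f t|)
    refine ⟨fun t => |f t| * (cesE (fun t => |f t|) t).toReal ^ (p/p₀ - 1),
      fun t => |f t| * (cesE (fun t => |f t|) t).toReal ^ (p/p₁ - 1), by fun_prop, by fun_prop,
      fun t => by positivity, fun t => by positivity,
      core hpp hp₀ (by fun_prop) (fun t => abs_nonneg _) h,
      core hpp hp₁ (by fun_prop) (fun t => abs_nonneg _) h, ?_⟩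
    have hfin := cG_fin hpp h
    have hφ : Measurable (fun t => ENNReal.ofReal |f t|) := by fun_prop
    filter_upwards [zero_ae hφ, ae_restrict_mem measurableSet_Ioi] with x hx hx0
    have hx0 : 0 < x := hx0
    by_cases hG : cG (fun t => ENNReal.ofReal |f t|) x = 0
    · have := ENNReal.ofReal_eq_zero.1 (hx hG)
      exact this.trans (by positivity)
    · have hFpos : 0 < (cesE (fun t => |f t|) x).toReal := by
        rw [cesE_eq, ENNReal.toReal_div, ENNReal.toReal_ofReal hx0.le]
        exact div_pos (ENNReal.toReal_pos hG (hfin x)) hx0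
      set w := (cesE (fun t => |f t|) x).toReal
      rw [Real.mul_rpow (abs_nonneg _) (by positivity), Real.mul_rpow (abs_nonneg _) (by positivity),
        ← Real.rpow_mul hFpos.le, ← Real.rpow_mul hFpos.le]
      have e1 : |f x| ^ (1-θ) * |f x| ^ θ = |f x| := by
        rw [← Real.rpow_add_of_nonneg (abs_nonneg _) hθ'.le hθ0.le]; simp
      have e2 : w ^ ((p/p₀-1)*(1-θ)) * w ^ ((p/p₁-1)*θ) = 1 := by
        rw [← Real.rpow_add hFpos]
        have : (p/p₀-1)*(1-θ) + (p/p₁-1)*θ = 0 := by linarith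
        rw [this, Real.rpow_zero]
      apply le_of_eq
      calc |f x| = (|f x| ^ (1-θ) * |f x| ^ θ) * (w ^ ((p/p₀-1)*(1-θ)) * w ^ ((p/p₁-1)*θ)) := by
            rw [e1, e2, mul_one]
        _ = _ := by ring
  · rintro ⟨f₀, f₁, hm0, hm1, hn0, hn1, hc0, hc1, hle⟩
    have hF0 := cesE_meas f₀
    have hF1 := cesE_meas f₁
    have hc0' : (∫⁻ x in Ioi (0:ℝ), cesE f₀ x ^ p₀) < ⊤ := hc0
    have hc1' : (∫⁻ x in Ioi (0:ℝ), cesE f₁ x ^ p₁) < ⊤ := hc1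
    have key : ∀ x ∈ Ioi (0:ℝ), cesE (fun t => |f t|) x ^ p ≤
        (cesE f₀ x ^ p₀) ^ ((1-θ) * (p/p₀)) * (cesE f₁ x ^ p₁) ^ (θ * (p/p₁)) := by
      intro x hx
      have hx : 0 < x := hx
      have i1 : ∫⁻ t in Ioo 0 x, ENNReal.ofReal |f t| ≤
          (∫⁻ t in Ioo 0 x, ENNReal.ofReal (f₀ t)) ^ (1-θ) *
          (∫⁻ t in Ioo 0 x, ENNReal.ofReal (f₁ t)) ^ θ := by
        refine le_trans ?_ (ENNReal.lintegral_mul_norm_pow_le (by fun_prop) (by fun_prop)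
          hθ'.le hθ0.le (by ring))
        apply lintegral_mono_ae
        filter_upwards [ae_restrict_of_ae_restrict_of_subset Ioo_subset_Ioi_self hle] with t ht
        rw [ENNReal.ofReal_rpow_of_nonneg (hn0 t) hθ'.le, ENNReal.ofReal_rpow_of_nonneg (hn1 t) hθ0.le,
          ← ENNReal.ofReal_mul (Real.rpow_nonneg (hn0 t) _)]
        exact ENNReal.ofReal_le_ofReal ht
      have i2 : cesE (fun t => |f t|) x ≤ cesE f₀ x ^ (1-θ) * cesE f₁ x ^ θ := by
        unfold cesE
        rw [ENNReal.div_rpow_of_nonneg _ _ hθ'.le, ENNReal.div_rpow_of_nonneg _ _ hθ0.le]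
        refine (ENNReal.div_le_div_right i1 _).trans (le_of_eq ?_)
        rw [ENNReal.ofReal_rpow_of_pos hx, ENNReal.ofReal_rpow_of_pos hx]
        simp only [div_eq_mul_inv]
        rw [mul_mul_mul_comm, ← ENNReal.ofReal_inv_of_pos hx,
          ← ENNReal.ofReal_inv_of_pos (by positivity), ← ENNReal.ofReal_inv_of_pos (by positivity),
          ← ENNReal.ofReal_mul (by positivity), ← mul_inv, ← Real.rpow_add hx]
        simp
      calc _ ≤ (cesE f₀ x ^ (1-θ) * cesE f₁ x ^ θ) ^ p := by gcongr
        _ = _ := by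
          rw [ENNReal.mul_rpow_of_nonneg _ _ hpp.le, ← ENNReal.rpow_mul, ← ENNReal.rpow_mul,
            ← ENNReal.rpow_mul, ← ENNReal.rpow_mul]
          congr 2 <;> field_simp
    have hA : 0 ≤ (1-θ) * (p/p₀) := by positivity
    have hB : 0 ≤ θ * (p/p₁) := by positivity
    refine lt_of_le_of_lt (setLIntegral_mono' measurableSet_Ioi key) ?_
    refine lt_of_le_of_lt (ENNReal.lintegral_mul_norm_pow_le (by fun_prop) (by fun_prop)
      hA hB hsum) ?_
    exact ENNReal.mul_lt_top (ENNReal.rpow_lt_top_of_nonneg hA hc0'.ne)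
      (ENNReal.rpow_lt_top_of_nonneg hB hc1'.ne)
end

section
/- Let 1 < p < ∞, 0 < θ < 1, and define q by 1/q = (1−θ) + θ/p. For a measurable function f : (0,∞) → ℝ the following are equivalent: (i) C|f| ∈ L^q(0,∞); (ii) there exist measurable f₀, f₁ : (0,∞) → [0,∞) with f₀ ∈ L^1(0,∞), C f₁ ∈ L^{p}(0,∞), and |f(x)| ≤ f₀(x)^{1−θ} f₁(x)^{θ} for almost every x. (That is, (L^1)^{1−θ}(Ces_p)^{θ} = Ces_q on [0,∞).) -/
open MeasureTheory Set

open scoped ENNReal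

lemma lA1 {δ t : ℝ} (hδ : 0 < δ) (ht : 0 < t) :
    ∫⁻ x in Ioi t, ENNReal.ofReal (x ^ (-1 - δ)) = ENNReal.ofReal (t ^ (-δ) / δ) := by
  rw [← ofReal_integral_eq_lintegral_ofReal]
  · rw [integral_Ioi_rpow_of_lt (by linarith) ht]
    congr 1
    have : -1 - δ + 1 = -δ := by ring
    rw [this, neg_div_neg_eq]
  · exact integrableOn_Ioi_rpow_of_lt (by linarith) ht
  · filter_upwards [ae_restrict_mem measurableSet_Ioi] with x hx
    exact Real.rpow_nonneg (ht.le.trans (le_of_lt hx)) _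

lemma lA2 {a x : ℝ} (ha : -1 < a) (hx : 0 < x) :
    ∫⁻ u in Ioo 0 x, ENNReal.ofReal (u ^ a) = ENNReal.ofReal (x ^ (a + 1) / (a + 1)) := by
  have hi := intervalIntegral.intervalIntegrable_rpow' ha (a := 0) (b := x)
  rw [intervalIntegrable_iff_integrableOn_Ioo_of_le hx.le] at hi
  rw [← ofReal_integral_eq_lintegral_ofReal hi]
  · rw [← integral_Ioc_eq_integral_Ioo, ← intervalIntegral.integral_of_le hx.le,
      integral_rpow (Or.inl ha), Real.zero_rpow (by linarith), sub_zero]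
  · filter_upwards [ae_restrict_mem measurableSet_Ioo] with u hu
    exact Real.rpow_nonneg hu.1.le _

lemma lTon {c : ℝ} (hc : 0 < c) {w g : ℝ → ENNReal} (hw : Measurable w) (hg : Measurable g) :
    ∫⁻ x in Ioi (0:ℝ), w x * ∫⁻ t in Ioo 0 (c * x), g t =
      ∫⁻ t in Ioi (0:ℝ), g t * ∫⁻ x in Ioi (t / c), w x := by
  have hS : MeasurableSet {z : ℝ × ℝ | 0 < z.2 ∧ z.2 < c * z.1} :=
    (measurableSet_lt measurable_const measurable_snd).inter
      (measurableSet_lt measurable_snd (measurable_fst.const_mul c))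
  set K : ℝ × ℝ → ENNReal :=
    {z : ℝ × ℝ | 0 < z.2 ∧ z.2 < c * z.1}.indicator (fun z => w z.1 * g z.2) with hK
  have hKm : Measurable K :=
    ((hw.comp measurable_fst).mul (hg.comp measurable_snd)).indicator hS
  have h1 : ∫⁻ x in Ioi (0:ℝ), w x * ∫⁻ t in Ioo 0 (c * x), g t = ∫⁻ x, ∫⁻ t, K (x, t) := by
    rw [← lintegral_indicator measurableSet_Ioi]
    refine lintegral_congr fun x => ?_
    by_cases hx : 0 < x
    · rw [indicator_of_mem (mem_Ioi.2 hx), ← lintegral_const_mul _ hg,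
        ← lintegral_indicator measurableSet_Ioo]
      refine lintegral_congr fun t => ?_
      simp [hK, indicator, mem_Ioo]
    · rw [indicator_of_notMem (by simpa using hx)]
      symm
      rw [lintegral_eq_zero_iff (by fun_prop)]
      refine Filter.Eventually.of_forall fun t => ?_
      simp only [hK, indicator, mem_ofPred_eq, Pi.zero_apply, ite_eq_right_iff]
      rintro ⟨h1, h2⟩
      nlinarith
  have h2 : ∫⁻ t in Ioi (0:ℝ), g t * ∫⁻ x in Ioi (t / c), w x = ∫⁻ t, ∫⁻ x, K (x, t) := by
    rw [← lintegral_indicator measurableSet_Ioi]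
    refine lintegral_congr fun t => ?_
    by_cases ht : 0 < t
    · rw [indicator_of_mem (mem_Ioi.2 ht), ← lintegral_const_mul _ hw,
        ← lintegral_indicator measurableSet_Ioi]
      refine lintegral_congr fun x => ?_
      simp [hK, indicator, ht, div_lt_iff₀ hc, mul_comm]
    · rw [indicator_of_notMem (by simpa using ht)]
      simp [hK, ht]
  rw [h1, h2]
  exact lintegral_lintegral_swap hKm.aemeasurable

lemma lmono (g : ℝ → ENNReal) : Monotone fun x : ℝ => ∫⁻ t in Ioo 0 x, g t :=
  fun _ _ h => lintegral_mono_set (Ioo_subset_Ioo_right h)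

lemma lmeas (g : ℝ → ENNReal) : Measurable fun x : ℝ => ∫⁻ t in Ioo 0 x, g t :=
  (lmono g).measurable

/-- sublevel sets of the primitive -/
lemma lsub (g : ℝ → ENNReal) (u : ENNReal) :
    ∫⁻ t in {t : ℝ | 0 < t ∧ ∫⁻ s in Ioo 0 t, g s ≤ u}, g t ≤ u := by
  set F := fun x : ℝ => ∫⁻ t in Ioo 0 x, g t with hF
  set S := {t : ℝ | 0 < t ∧ F t ≤ u} with hS
  have hdown : ∀ t ∈ S, ∀ r, 0 < r → r ≤ t → r ∈ S := fun t ht r hr hrt =>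
    ⟨hr, (lmono g hrt).trans ht.2⟩
  set U : Set ℝ := ⋃ r : {r : ℚ // (r : ℝ) ∈ S}, Ioo 0 ((r : ℚ) : ℝ) with hU
  have hcov : S ⊆ U ∪ {t | t ∈ S ∧ ∀ s ∈ S, s ≤ t} := by
    intro t ht
    by_cases h : ∀ s ∈ S, s ≤ t
    · exact Or.inr ⟨ht, h⟩
    · push Not at h
      obtain ⟨s, hs, hts⟩ := h
      obtain ⟨r, hr1, hr2⟩ := exists_rat_btwn hts
      exact Or.inl (mem_iUnion.2 ⟨⟨r, hdown s hs r (ht.1.trans hr1) hr2.le⟩, ht.1, hr1⟩)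
  have hnull : volume {t | t ∈ S ∧ ∀ s ∈ S, s ≤ t} = 0 := by
    apply Set.Subsingleton.measure_zero
    intro a ha b hb
    exact le_antisymm (hb.2 a ha.1) (ha.2 b hb.1)
  calc ∫⁻ t in S, g t ≤ ∫⁻ t in U ∪ {t | t ∈ S ∧ ∀ s ∈ S, s ≤ t}, g t := lintegral_mono_set hcov
    _ ≤ (∫⁻ t in U, g t) + ∫⁻ t in {t | t ∈ S ∧ ∀ s ∈ S, s ≤ t}, g t := lintegral_union_le _ _ _
    _ = ∫⁻ t in U, g t := by rw [setLIntegral_measure_zero _ _ hnull, add_zero]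
    _ = ⨆ r : {r : ℚ // (r : ℝ) ∈ S}, ∫⁻ t in Ioo 0 ((r : ℚ) : ℝ), g t := by
        rw [hU]
        apply setLIntegral_iUnion_of_directed
        intro a b
        rcases le_total (a : ℚ) (b : ℚ) with h | h
        · exact ⟨b, Ioo_subset_Ioo_right (by exact_mod_cast h), subset_rfl⟩
        · exact ⟨a, subset_rfl, Ioo_subset_Ioo_right (by exact_mod_cast h)⟩
    _ ≤ u := iSup_le fun r => r.2.2

lemma ldiv (A : ENNReal) {x : ℝ} (hx : 0 < x) :
    A / ENNReal.ofReal x = A * ENNReal.ofReal (x⁻¹) := by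
  rw [ENNReal.ofReal_inv_of_pos hx, div_eq_mul_inv]

lemma lL {g : ℝ → ENNReal} (hg : Measurable g) {s x : ℝ} (hs0 : 0 < s) (hs1 : s < 1)
    (hfin : ∫⁻ t in Ioo 0 x, g t ≠ ⊤) :
    ∫⁻ t in Ioo 0 x, g t * ENNReal.ofReal (((∫⁻ r in Ioo 0 t, g r).toReal⁻¹) ^ s) ≤
      ENNReal.ofReal (1 / (1 - s)) * (∫⁻ t in Ioo 0 x, g t) ^ (1 - s) := by
  set F := fun x : ℝ => ∫⁻ t in Ioo 0 x, g t with hF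
  have hFm : Measurable F := lmeas g
  rcases eq_or_ne (F x) 0 with h0 | h0
  · have h1 := (lintegral_eq_zero_iff hg).1 h0
    have : ∫⁻ t in Ioo 0 x, g t * ENNReal.ofReal (((∫⁻ r in Ioo 0 t, g r).toReal⁻¹) ^ s) = 0 := by
      rw [← lintegral_zero (μ := volume.restrict (Ioo 0 x))]
      apply lintegral_congr_ae
      filter_upwards [h1] with t ht
      simp [ht]
    rw [this]; exact zero_le
  set m := (F x).toReal with hm
  have hm0 : 0 < m := ENNReal.toReal_pos h0 hfin
  have hFx : F x = ENNReal.ofReal m := (ENNReal.ofReal_toReal hfin).symm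
  set h : ℝ → ℝ := fun t => (F t).toReal⁻¹ with hh
  have hhm : Measurable h := hFm.ennreal_toReal.inv
  have hh0 : ∀ t, 0 ≤ h t := fun t => inv_nonneg.2 ENNReal.toReal_nonneg
  set ν := (volume.restrict (Ioo 0 x)).withDensity g with hν
  have e1 : ∫⁻ t in Ioo 0 x, g t * ENNReal.ofReal (h t ^ s) = ∫⁻ t, ENNReal.ofReal (h t ^ s) ∂ν := by
    rw [hν, lintegral_withDensity_eq_lintegral_mul _ hg (by fun_prop)]
    rfl
  change ∫⁻ t in Ioo 0 x, g t * ENNReal.ofReal (h t ^ s) ≤ ENNReal.ofReal (1 / (1 - s)) * (F x) ^ (1 - s)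
  rw [e1, lintegral_rpow_eq_lintegral_meas_le_mul ν (Filter.Eventually.of_forall hh0)
    hhm.aemeasurable hs0]
  have b1 : ∀ u, ν {t | u ≤ h t} ≤ ENNReal.ofReal m := by
    intro u
    rw [← hFx]
    refine (measure_mono (subset_univ _)).trans ?_
    rw [hν, withDensity_apply _ MeasurableSet.univ, Measure.restrict_univ]
  have b2 : ∀ u, 0 < u → ν {t | u ≤ h t} ≤ ENNReal.ofReal (u⁻¹) := by
    intro u hu
    rw [hν, withDensity_apply _ (measurableSet_le measurable_const hhm),
      Measure.restrict_restrict (measurableSet_le measurable_const hhm)]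
    refine (lintegral_mono_set ?_).trans (lsub g (ENNReal.ofReal u⁻¹))
    rintro t ⟨ht1, ht2⟩
    refine ⟨ht2.1, ?_⟩
    have hft : F t ≠ ⊤ := ((lmono g ht2.2.le).trans_lt (lt_top_iff_ne_top.2 hfin)).ne
    change F t ≤ _
    rw [← ENNReal.ofReal_toReal hft]
    apply ENNReal.ofReal_le_ofReal
    have ht1' : u ≤ (F t).toReal⁻¹ := ht1
    exact (le_inv_comm₀ hu (inv_pos.1 (hu.trans_le ht1'))).1 ht1'
  have hmi : 0 < m⁻¹ := inv_pos.2 hm0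
  have hsplit : Ioi (0:ℝ) ⊆ Ioo 0 m⁻¹ ∪ ({m⁻¹} ∪ Ioi m⁻¹) := by
    intro u hu
    rcases lt_trichotomy u m⁻¹ with h | h | h
    · exact Or.inl ⟨hu, h⟩
    · exact Or.inr (Or.inl h)
    · exact Or.inr (Or.inr h)
  have i1 : ∫⁻ u in Ioo 0 m⁻¹, ν {t | u ≤ h t} * ENNReal.ofReal (u ^ (s - 1)) ≤
      ENNReal.ofReal (m * ((m⁻¹) ^ s / s)) := by
    calc _ ≤ ∫⁻ u in Ioo 0 m⁻¹, ENNReal.ofReal m * ENNReal.ofReal (u ^ (s - 1)) := by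
          gcongr with u; exact b1 u
      _ = _ := by
          rw [lintegral_const_mul _ (by fun_prop), lA2 (by linarith) hmi, ENNReal.ofReal_mul hm0.le]
          simp
  have i2 : ∫⁻ u in Ioi m⁻¹, ν {t | u ≤ h t} * ENNReal.ofReal (u ^ (s - 1)) ≤
      ENNReal.ofReal ((m⁻¹) ^ (-(1 - s)) / (1 - s)) := by
    rw [← lA1 (by linarith) hmi]
    refine setLIntegral_mono' measurableSet_Ioi fun u hu => ?_
    have hu0 : 0 < u := hmi.trans hu
    refine (mul_le_mul_left (b2 u hu0) _).trans ?_
    rw [← ENNReal.ofReal_mul (by positivity), ← Real.rpow_neg_one u, ← Real.rpow_add hu0]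
    apply le_of_eq; congr 2; ring
  have i3 : ∫⁻ u in Ioi (0:ℝ), ν {t | u ≤ h t} * ENNReal.ofReal (u ^ (s - 1)) ≤
      ENNReal.ofReal (m * ((m⁻¹) ^ s / s)) + ENNReal.ofReal ((m⁻¹) ^ (-(1 - s)) / (1 - s)) := by
    refine (lintegral_mono_set hsplit).trans ((lintegral_union_le _ _ _).trans ?_)
    refine add_le_add i1 ((lintegral_union_le _ _ _).trans ?_)
    rw [setLIntegral_measure_zero _ _ (by simp), zero_add]
    exact i2
  refine (mul_le_mul_right i3 _).trans ?_
  have h1s : 0 < 1 - s := by linarith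
  rw [hFx, ENNReal.ofReal_rpow_of_pos hm0, ← ENNReal.ofReal_add (by positivity) (by positivity),
    ← ENNReal.ofReal_mul hs0.le, ← ENNReal.ofReal_mul (by positivity)]
  apply ENNReal.ofReal_le_ofReal
  rw [Real.inv_rpow hm0.le, Real.inv_rpow hm0.le, ← Real.rpow_neg hm0.le, ← Real.rpow_neg hm0.le,
    neg_neg, show m ^ (1 - s) = m * m ^ (-s) by
      rw [sub_eq_add_neg, Real.rpow_add hm0, Real.rpow_one]]
  apply le_of_eq
  field_simp
  ring

/-- integrability of `f₀` -/
lemma lF0 {g : ℝ → ENNReal} (hg : Measurable g) {q : ℝ} (hq : 1 < q) :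
    ∫⁻ t in Ioi (0:ℝ), g t * ((∫⁻ r in Ioo 0 t, g r) ^ (q - 1) * ENNReal.ofReal (t ^ (1 - q))) ≤
      ENNReal.ofReal (q - 1) * ∫⁻ x in Ioi (0:ℝ), ((∫⁻ r in Ioo 0 x, g r) / ENNReal.ofReal x) ^ q := by
  set F := fun x : ℝ => ∫⁻ t in Ioo 0 x, g t with hF
  have hFm : Measurable F := lmeas g
  have hd : 0 < q - 1 := by linarith
  have hT := lTon (c := 1) one_pos (w := fun x => ENNReal.ofReal (x ^ (-1 - (q - 1))))
    (g := fun t => g t * F t ^ (q - 1)) (by fun_prop) (by fun_prop)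
  calc _ = ∫⁻ t in Ioi (0:ℝ), ENNReal.ofReal (q - 1) * ((g t * F t ^ (q - 1)) *
        ∫⁻ x in Ioi (t / 1), ENNReal.ofReal (x ^ (-1 - (q - 1)))) := by
        refine setLIntegral_congr_fun measurableSet_Ioi fun t ht => ?_
        beta_reduce
        rw [div_one, lA1 hd ht, mul_left_comm (ENNReal.ofReal (q - 1)), ← ENNReal.ofReal_mul hd.le,
          mul_div_cancel₀ _ hd.ne', neg_sub, mul_assoc]
    _ = ENNReal.ofReal (q - 1) * ∫⁻ x in Ioi (0:ℝ), ENNReal.ofReal (x ^ (-1 - (q - 1))) *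
        ∫⁻ t in Ioo 0 (1 * x), (g t * F t ^ (q - 1)) := by
        rw [hT, lintegral_const_mul' _ _ ENNReal.ofReal_ne_top]
    _ ≤ _ := by
        gcongr ENNReal.ofReal (q - 1) * ?_
        refine setLIntegral_mono' measurableSet_Ioi fun x hx => ?_
        have hx0 : (0:ℝ) < x := hx
        rw [one_mul]
        have : ∫⁻ t in Ioo 0 x, (g t * F t ^ (q - 1)) ≤ F x * F x ^ (q - 1) := by
          calc _ ≤ ∫⁻ t in Ioo 0 x, g t * F x ^ (q - 1) := by
                refine setLIntegral_mono' measurableSet_Ioo fun t ht => ?_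
                gcongr
                exact lmono g ht.2.le
            _ = _ := by rw [lintegral_mul_const _ hg]
        refine (mul_le_mul_right this _).trans ?_
        change _ ≤ (F x / ENNReal.ofReal x) ^ q
        rw [ldiv _ hx0, ENNReal.mul_rpow_of_nonneg _ _ (by linarith : 0 ≤ q),
          ENNReal.ofReal_rpow_of_pos (inv_pos.2 hx0), Real.inv_rpow hx0.le, ← Real.rpow_neg hx0.le,
          mul_comm]
        have e : F x * F x ^ (q - 1) = F x ^ q := by
          conv_lhs => rw [← ENNReal.rpow_one (F x), ← ENNReal.rpow_mul, one_mul]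
          rw [← ENNReal.rpow_add_of_nonneg _ _ zero_le_one hd.le]
          congr 1; ring
        rw [e]
        apply le_of_eq; congr 3; ring

lemma lpre {g : ℝ → ENNReal} (hg : Measurable g) {β x : ℝ} (hβ : 0 < β) :
    ∫⁻ t in Ioo 0 x, g t * ENNReal.ofReal (t ^ (-β)) ≤
      ENNReal.ofReal (2 ^ (β + 1)) * ∫⁻ u in Ioo 0 (2 * x), ENNReal.ofReal (u ^ (-β)) *
        ((∫⁻ t in Ioo 0 u, g t) / ENNReal.ofReal u) := by
  have hT := lTon (c := 1) one_pos
    (w := (Ioo 0 (2 * x)).indicator fun u => ENNReal.ofReal (u ^ (-β - 1)))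
    (g := (Ioo 0 x).indicator g)
    (Measurable.indicator (by fun_prop) measurableSet_Ioo) (hg.indicator measurableSet_Ioo)
  calc _ = ∫⁻ t in Ioi (0:ℝ), (Ioo 0 x).indicator g t * ENNReal.ofReal (t ^ (-β)) := by
        rw [← lintegral_indicator measurableSet_Ioi, ← lintegral_indicator measurableSet_Ioo]
        refine lintegral_congr fun t => ?_
        by_cases ht : t ∈ Ioo 0 x
        · have : t ∈ Ioi (0:ℝ) := ht.1
          simp only [indicator_of_mem ht, indicator_of_mem this]
        · by_cases h2 : t ∈ Ioi (0:ℝ)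
          · simp only [indicator_of_notMem ht, indicator_of_mem h2, zero_mul]
          · simp only [indicator_of_notMem ht, indicator_of_notMem h2]
    _ ≤ ∫⁻ t in Ioi (0:ℝ), ENNReal.ofReal (2 ^ (β + 1)) * ((Ioo 0 x).indicator g t *
        ∫⁻ u in Ioi (t / 1), (Ioo 0 (2 * x)).indicator (fun u => ENNReal.ofReal (u ^ (-β - 1))) u) := by
        refine setLIntegral_mono' measurableSet_Ioi fun t ht => ?_
        by_cases h2 : t ∈ Ioo 0 x
        · rw [mul_left_comm]
          refine mul_le_mul_right ?_ _
          have ht0 : (0:ℝ) < t := ht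
          have : ∫⁻ u in Ioo t (2 * t), ENNReal.ofReal ((2 * t) ^ (-β - 1)) ≤
              ∫⁻ u in Ioi (t / 1),
                (Ioo 0 (2 * x)).indicator (fun u => ENNReal.ofReal (u ^ (-β - 1))) u := by
            rw [div_one]
            refine le_trans ?_ (lintegral_mono_set (show Ioo t (2 * t) ⊆ Ioi t from Ioo_subset_Ioi_self))
            refine setLIntegral_mono' measurableSet_Ioo fun u hu => ?_
            have hu0 : 0 < u := ht0.trans hu.1
            have hmem : u ∈ Ioo 0 (2 * x) := ⟨hu0, by linarith [hu.2, h2.2]⟩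
            rw [indicator_of_mem hmem]
            exact ENNReal.ofReal_le_ofReal
              (Real.rpow_le_rpow_of_nonpos hu0 hu.2.le (by linarith))
          refine le_trans ?_ (mul_le_mul_right this _)
          rw [setLIntegral_const, Real.volume_Ioo, ← ENNReal.ofReal_mul (by positivity),
            ← ENNReal.ofReal_mul (by positivity)]
          apply ENNReal.ofReal_le_ofReal
          rw [Real.mul_rpow (by norm_num) ht0.le, show -β - 1 = -(β + 1) by ring,
            Real.rpow_neg (by norm_num : (0:ℝ) ≤ 2), Real.rpow_neg ht0.le, Real.rpow_neg ht0.le,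
            Real.rpow_add_one ht0.ne']
          apply le_of_eq
          field_simp
          ring
        · rw [indicator_of_notMem h2, zero_mul]; exact zero_le
    _ = ENNReal.ofReal (2 ^ (β + 1)) * ∫⁻ u in Ioi (0:ℝ),
        (Ioo 0 (2 * x)).indicator (fun u => ENNReal.ofReal (u ^ (-β - 1))) u *
          ∫⁻ t in Ioo 0 (1 * u), (Ioo 0 x).indicator g t := by
        rw [hT, lintegral_const_mul' _ _ ENNReal.ofReal_ne_top]
    _ ≤ _ := by
        refine mul_le_mul_right ?_ _
        rw [← lintegral_indicator measurableSet_Ioi, ← lintegral_indicator measurableSet_Ioo]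
        refine lintegral_mono fun u => ?_
        by_cases hu : u ∈ Ioo 0 (2 * x)
        · have hu' : u ∈ Ioi (0:ℝ) := hu.1
          have hu0 : 0 < u := hu.1
          simp only [indicator_of_mem hu, indicator_of_mem hu', one_mul]
          rw [ldiv _ hu0, mul_left_comm, ← ENNReal.ofReal_mul (by positivity), mul_comm,
            ← Real.rpow_neg_one u, ← Real.rpow_add hu0, ← sub_eq_add_neg]
          gcongr with t
          exact indicator_le_self _ _ t
        · simp only [indicator_of_notMem hu]
          by_cases h2 : u ∈ Ioi (0:ℝ)
          · simp only [indicator_of_mem h2, indicator_of_notMem hu, zero_mul, le_refl]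
          · simp only [indicator_of_notMem h2, le_refl]

lemma lHardy {g : ℝ → ENNReal} (hg : Measurable g) {p β : ℝ} (hp : 1 < p)
    (hβ : β = (1 - 1 / p) / 4) :
    ∃ K : ENNReal, K ≠ ⊤ ∧
    ∫⁻ x in Ioi (0:ℝ), (ENNReal.ofReal (x ^ (β - 1)) *
        ∫⁻ t in Ioo 0 x, g t * ENNReal.ofReal (t ^ (-β))) ^ p ≤
      K * ∫⁻ x in Ioi (0:ℝ), ((∫⁻ t in Ioo 0 x, g t) / ENNReal.ofReal x) ^ p := by
  have hp0 : 0 < p := by linarith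
  have hip : 1 / p < 1 := by rw [div_lt_one hp0]; exact hp
  have hβ0 : 0 < β := by rw [hβ]; linarith
  have hβp : β * p = (p - 1) / 4 := by rw [hβ]; field_simp
  set δ := β * p with hδ
  have hδ0 : 0 < δ := by positivity
  set G : ℝ → ENNReal := fun x => (∫⁻ t in Ioo 0 x, g t) / ENNReal.ofReal x with hG
  have hGm : Measurable G := (lmeas g).div (by fun_prop)
  set c1 : ℝ := 2 ^ (β + 1) with hc1
  have hc1p : 0 < c1 := by positivity
  set c2 : ℝ := c1 ^ p * (2 * 2 ^ (1/2 : ℝ)) ^ (p - 1) with hc2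
  have hc2p : 0 < c2 := by positivity
  -- pointwise bound
  have key : ∀ x ∈ Ioi (0:ℝ), (ENNReal.ofReal (x ^ (β - 1)) *
        ∫⁻ t in Ioo 0 x, g t * ENNReal.ofReal (t ^ (-β))) ^ p ≤
      ENNReal.ofReal c2 * (ENNReal.ofReal (x ^ (-1 - δ)) *
        ∫⁻ u in Ioo 0 (2 * x), ENNReal.ofReal (u ^ δ) * G u ^ p) := by
    intro x hx
    have hx0 : (0:ℝ) < x := hx
    have hH : ∫⁻ u in Ioo 0 (2 * x), ENNReal.ofReal (u ^ (-β)) * G u ≤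
        ENNReal.ofReal (2 * (2 * x) ^ (1/2 : ℝ)) ^ (1 - 1 / p) *
          (∫⁻ u in Ioo 0 (2 * x), ENNReal.ofReal (u ^ δ) * G u ^ p) ^ (1 / p) := by
      have hm1 : AEMeasurable (fun u : ℝ => ENNReal.ofReal (u ^ (-(1/2) : ℝ)))
        (volume.restrict (Ioo 0 (2 * x))) :=
        (Measurable.ennreal_ofReal (measurable_id.pow_const _)).aemeasurable
      have hm2 : AEMeasurable (fun u : ℝ => ENNReal.ofReal (u ^ δ) * G u ^ p)
        (volume.restrict (Ioo 0 (2 * x))) :=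
        ((Measurable.ennreal_ofReal (measurable_id.pow_const _)).mul
          (hGm.pow_const _)).aemeasurable
      have h1 := ENNReal.lintegral_mul_norm_pow_le (μ := volume.restrict (Ioo 0 (2 * x)))
        (f := fun u => ENNReal.ofReal (u ^ (-(1/2) : ℝ)))
        (g := fun u => ENNReal.ofReal (u ^ δ) * G u ^ p)
        hm1 hm2 (p := 1 - 1 / p) (q := 1 / p)
        (by linarith) (by positivity) (by ring)
      rw [lA2 (by norm_num) (by positivity)] at h1
      have e : (2 * x) ^ (-(1/2) + 1 : ℝ) / (-(1/2) + 1) = 2 * (2 * x) ^ (1/2 : ℝ) := by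
        norm_num; ring
      rw [e] at h1
      refine le_trans (le_of_eq ?_) h1
      refine setLIntegral_congr_fun measurableSet_Ioo fun u hu => ?_
      have hu0 : 0 < u := hu.1
      beta_reduce
      rw [ENNReal.mul_rpow_of_nonneg _ _ (by positivity), ← ENNReal.rpow_mul,
        mul_one_div_cancel hp0.ne', ENNReal.rpow_one, ← mul_assoc,
        ENNReal.ofReal_rpow_of_pos (by positivity), ENNReal.ofReal_rpow_of_pos (by positivity),
        ← ENNReal.ofReal_mul (by positivity), ← Real.rpow_mul hu0.le, ← Real.rpow_mul hu0.le,
        ← Real.rpow_add hu0]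
      congr 3
      rw [hδ, mul_assoc, mul_one_div_cancel hp0.ne', hβ]; ring
    calc _ ≤ (ENNReal.ofReal (x ^ (β - 1)) * (ENNReal.ofReal c1 *
          (ENNReal.ofReal (2 * (2 * x) ^ (1/2 : ℝ)) ^ (1 - 1 / p) *
          (∫⁻ u in Ioo 0 (2 * x), ENNReal.ofReal (u ^ δ) * G u ^ p) ^ (1 / p)))) ^ p := by
          refine ENNReal.rpow_le_rpow (mul_le_mul_right ?_ _) hp0.le
          exact (lpre hg hβ0).trans (mul_le_mul_right hH _)
      _ = _ := by
          rw [← mul_assoc, ← mul_assoc, ENNReal.mul_rpow_of_nonneg _ _ hp0.le,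
            ← ENNReal.rpow_mul, one_div_mul_cancel hp0.ne', ENNReal.rpow_one, ← mul_assoc]
          congr 1
          rw [ENNReal.ofReal_rpow_of_pos (by positivity), ← ENNReal.ofReal_mul (by positivity),
            ← ENNReal.ofReal_mul (by positivity), ← ENNReal.ofReal_mul (by positivity),
            ENNReal.ofReal_rpow_of_pos (by positivity)]
          congr 1
          rw [Real.mul_rpow (by positivity) (by positivity),
            Real.mul_rpow (by positivity) (by positivity), ← Real.rpow_mul hx0.le,
            ← Real.rpow_mul (by positivity : 0 ≤ 2 * (2 * x) ^ (1/2 : ℝ)), Real.mul_rpow (by positivity : (0:ℝ) ≤ 2) hx0.le,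
            ← mul_assoc (2:ℝ), Real.mul_rpow (by positivity) (by positivity),
            ← Real.rpow_mul hx0.le, hc2]
          have e1 : (1 - 1 / p) * p = p - 1 := by field_simp
          rw [e1]
          have e2 : x ^ (-1 - δ) = x ^ ((β - 1) * p) * x ^ (1 / 2 * (p - 1)) := by
            rw [← Real.rpow_add hx0]; congr 1
            have : (β - 1) * p = δ - p := by rw [hδ]; ring
            rw [this, hβp]; ring
          rw [e2]; ring
  refine ⟨ENNReal.ofReal c2 * ENNReal.ofReal (2 ^ δ / δ),
    ENNReal.mul_ne_top ENNReal.ofReal_ne_top ENNReal.ofReal_ne_top, ?_⟩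
  refine (setLIntegral_mono' measurableSet_Ioi key).trans ?_
  rw [lintegral_const_mul' _ _ ENNReal.ofReal_ne_top,
    lTon (c := 2) two_pos (by fun_prop) (by fun_prop), mul_assoc]
  refine mul_le_mul_right ?_ _
  rw [← lintegral_const_mul' _ _ ENNReal.ofReal_ne_top]
  refine setLIntegral_mono' measurableSet_Ioi fun u hu => ?_
  have hu0 : (0:ℝ) < u := hu
  rw [lA1 hδ0 (by positivity), mul_right_comm, ← ENNReal.ofReal_mul (by positivity)]
  apply le_of_eq
  congr 2
  rw [Real.rpow_neg (by positivity), Real.div_rpow hu0.le (by norm_num)]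
  have := (Real.rpow_pos_of_pos hu0 δ).ne'
  field_simp

lemma lq {p θ q : ℝ} (hp : 1 < p) (hθ0 : 0 < θ) (hθ1 : θ < 1)
    (hq : 1 / q = (1 - θ) + θ / p) : 1 < q ∧ q < p ∧ (1 - θ) * q + θ * q / p = 1 := by
  have hp0 : 0 < p := by linarith
  have h1 : 0 < (1 - θ) + θ / p := by have : 0 < θ / p := by positivity
                                      linarith
  have hq0 : 0 < q := by rw [← hq] at h1; exact one_div_pos.1 h1
  have e : (1 - θ) * q + θ * q / p = 1 := by
    have : q * (1 / q) = 1 := mul_one_div_cancel hq0.ne'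
    rw [hq] at this; linear_combination this
  have hlt : θ / p < θ := div_lt_self hθ0 hp
  refine ⟨?_, ?_, e⟩
  · have : 1 / q < 1 := by rw [hq]; linarith
    rwa [div_lt_one hq0] at this
  · have : 1 / p < 1 / q := by
      rw [hq]
      have : 1 / p < 1 := by rw [div_lt_one hp0]; exact hp
      have h3 : θ / p = θ * (1 / p) := by ring
      rw [h3]; nlinarith
    exact lt_of_one_div_lt_one_div hp0 this

/-- (ii) implies (i) -/
lemma lBack {p θ q : ℝ} (hp : 1 < p) (hθ0 : 0 < θ) (hθ1 : θ < 1)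
    (hq : 1 / q = (1 - θ) + θ / p) {g a b : ℝ → ENNReal}
    (ha : Measurable a) (hb : Measurable b)
    (hga : ∀ᵐ x ∂(volume.restrict (Ioi (0:ℝ))), g x ≤ a x ^ (1 - θ) * b x ^ θ)
    (h0 : ∫⁻ t in Ioi (0:ℝ), a t ≠ ⊤)
    (h1 : ∫⁻ x in Ioi (0:ℝ), ((∫⁻ t in Ioo 0 x, b t) / ENNReal.ofReal x) ^ p ≠ ⊤) :
    ∫⁻ x in Ioi (0:ℝ), ((∫⁻ t in Ioo 0 x, g t) / ENNReal.ofReal x) ^ q < ⊤ := by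
  obtain ⟨hq1, hqp, hsum⟩ := lq hp hθ0 hθ1 hq
  have hp0 : 0 < p := by linarith
  have hq0 : 0 < q := by linarith
  have hip : 1 / p < 1 := by rw [div_lt_one hp0]; exact hp
  have h1θ : 0 < 1 - θ := by linarith
  obtain ⟨β, hβ⟩ : ∃ β, β = (1 - 1 / p) / 4 := ⟨_, rfl⟩
  have hβ0 : 0 < β := by rw [hβ]; linarith
  set α := β * θ / (1 - θ) with hα
  have hα0 : 0 < α := by positivity
  have hαβ : α * (1 - θ) = β * θ := by rw [hα]; field_simp
  obtain ⟨K, hK, hHardy⟩ := lHardy hb hp hβ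
  set A := fun x : ℝ => ∫⁻ t in Ioo 0 x, a t * ENNReal.ofReal (t ^ α) with hA
  set B := fun x : ℝ => ∫⁻ t in Ioo 0 x, b t * ENNReal.ofReal (t ^ (-β)) with hB
  have hAm : Measurable A := lmeas _
  have hBm : Measurable B := lmeas _
  have step1 : ∀ x, ∫⁻ t in Ioo 0 x, g t ≤ A x ^ (1 - θ) * B x ^ θ := by
    intro x
    refine le_trans ?_ (ENNReal.lintegral_mul_norm_pow_le (by fun_prop) (by fun_prop)
      h1θ.le hθ0.le (by ring))
    apply lintegral_mono_ae
    have hga' := ae_restrict_of_ae_restrict_of_subset (show Ioo (0:ℝ) x ⊆ Ioi 0 from Ioo_subset_Ioi_self) hga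
    filter_upwards [hga', ae_restrict_mem measurableSet_Ioo] with t ht htx
    have ht0 : 0 < t := htx.1
    refine ht.trans (le_of_eq ?_)
    rw [ENNReal.mul_rpow_of_nonneg _ _ h1θ.le, ENNReal.mul_rpow_of_nonneg _ _ hθ0.le,
      mul_mul_mul_comm, ENNReal.ofReal_rpow_of_pos (by positivity),
      ENNReal.ofReal_rpow_of_pos (by positivity), ← ENNReal.ofReal_mul (by positivity),
      ← Real.rpow_mul ht0.le, ← Real.rpow_mul ht0.le, ← Real.rpow_add ht0, hαβ]
    simp
  have step2 : ∀ x ∈ Ioi (0:ℝ), ((∫⁻ t in Ioo 0 x, g t) / ENNReal.ofReal x) ^ q ≤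
      (ENNReal.ofReal (x ^ (-1 - α)) * A x) ^ ((1 - θ) * q) *
        ((ENNReal.ofReal (x ^ (β - 1)) * B x) ^ p) ^ (θ * q / p) := by
    intro x hx
    have hx0 : (0:ℝ) < x := hx
    rw [ldiv _ hx0]
    refine (ENNReal.rpow_le_rpow (mul_le_mul_left (step1 x) _) hq0.le).trans (le_of_eq ?_)
    rw [← ENNReal.rpow_mul, mul_div_cancel₀ _ hp0.ne', ENNReal.rpow_mul, ENNReal.rpow_mul,
      ← ENNReal.mul_rpow_of_nonneg _ _ hq0.le, ENNReal.mul_rpow_of_nonneg _ _ h1θ.le,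
      ENNReal.mul_rpow_of_nonneg _ _ hθ0.le, mul_mul_mul_comm,
      ENNReal.ofReal_rpow_of_pos (by positivity),
      ENNReal.ofReal_rpow_of_pos (by positivity), ← ENNReal.ofReal_mul (by positivity),
      ← Real.rpow_mul hx0.le, ← Real.rpow_mul hx0.le, ← Real.rpow_add hx0,
      ← Real.rpow_neg_one x, mul_comm]
    congr 4
    linear_combination hαβ
  refine (setLIntegral_mono' measurableSet_Ioi step2).trans_lt ?_
  refine (ENNReal.lintegral_mul_norm_pow_le (by fun_prop) (by fun_prop)
      (by positivity) (by positivity) hsum).trans_lt ?_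
  refine ENNReal.mul_lt_top (ENNReal.rpow_lt_top_of_nonneg (by positivity) ?_)
    (ENNReal.rpow_lt_top_of_nonneg (by positivity) ?_)
  · have hT := lTon (c := 1) one_pos (w := fun x => ENNReal.ofReal (x ^ (-1 - α)))
      (g := fun t => a t * ENNReal.ofReal (t ^ α)) (by fun_prop) (by fun_prop)
    simp only [one_mul, div_one] at hT
    rw [hA, hT]
    have : ∫⁻ t in Ioi (0:ℝ), a t * ENNReal.ofReal (t ^ α) *
        ∫⁻ x in Ioi t, ENNReal.ofReal (x ^ (-1 - α)) =
        ∫⁻ t in Ioi (0:ℝ), a t * ENNReal.ofReal (1 / α) := by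
      refine setLIntegral_congr_fun measurableSet_Ioi fun t ht => ?_
      have ht0 : (0:ℝ) < t := ht
      beta_reduce
      rw [lA1 hα0 ht0, mul_assoc, ← ENNReal.ofReal_mul (by positivity), Real.rpow_neg ht0.le]
      have := (Real.rpow_pos_of_pos ht0 α).ne'
      congr 2
      field_simp
    rw [this, lintegral_mul_const _ ha]
    exact ENNReal.mul_ne_top h0 ENNReal.ofReal_ne_top
  · exact (hHardy.trans_lt (ENNReal.mul_lt_top hK.lt_top h1.lt_top)).ne

lemma lfin {g : ℝ → ENNReal} {q : ℝ} (hq : 1 < q)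
    (h : ∫⁻ x in Ioi (0:ℝ), ((∫⁻ t in Ioo 0 x, g t) / ENNReal.ofReal x) ^ q < ⊤) (x : ℝ) :
    ∫⁻ t in Ioo 0 x, g t ≠ ⊤ := by
  intro hx
  have hx0 : 0 < x := by
    by_contra hc
    rw [Ioo_eq_empty hc] at hx
    simp at hx
  refine absurd h (not_lt.2 ?_)
  calc (⊤ : ENNReal) = ∫⁻ y in Ioi x, ⊤ := by simp
    _ ≤ ∫⁻ y in Ioi x, ((∫⁻ t in Ioo 0 y, g t) / ENNReal.ofReal y) ^ q := by
        refine setLIntegral_mono' measurableSet_Ioi fun y hy => ?_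
        have : ∫⁻ t in Ioo 0 y, g t = ⊤ := top_le_iff.1 (hx ▸ lmono g (le_of_lt hy))
        rw [this, ENNReal.top_div_of_ne_top ENNReal.ofReal_ne_top,
          ENNReal.top_rpow_of_pos (by linarith)]
    _ ≤ _ := lintegral_mono_set (Ioi_subset_Ioi hx0.le)

/-- `(L^1)^{1−θ}(Ces_p)^{θ} = Ces_q` on `[0,∞)` for `1 < p < ∞`, `0 < θ < 1` and
`1/q = (1−θ) + θ/p`: `C|f| ∈ L^q` iff `|f| ≤ f₀^{1−θ} f₁^{θ}` a.e. on `(0,∞)` for some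
nonnegative measurable `f₀ ∈ L^1(0,∞)` and `f₁` with `Cf₁ ∈ L^p(0,∞)`. -/
theorem stmt14 (p θ q : ℝ) (hp : 1 < p) (hθ0 : 0 < θ) (hθ1 : θ < 1)
    (hq : 1 / q = (1 - θ) + θ / p)
    (f : ℝ → ℝ) (hf : Measurable f) :
    memCes q (fun t => |f t|) ↔
      ∃ f₀ f₁ : ℝ → ℝ, Measurable f₀ ∧ Measurable f₁ ∧
        (∀ t, 0 ≤ f₀ t) ∧ (∀ t, 0 ≤ f₁ t) ∧
        (∫⁻ t in Set.Ioi (0:ℝ), ENNReal.ofReal (f₀ t)) < ⊤ ∧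
        memCes p f₁ ∧
        (∀ᵐ x ∂(MeasureTheory.volume.restrict (Set.Ioi (0:ℝ))),
          |f x| ≤ f₀ x ^ (1 - θ) * f₁ x ^ θ) := by
  obtain ⟨hq1, hqp, hsum⟩ := lq hp hθ0 hθ1 hq
  have hp0 : 0 < p := by linarith
  have hq0 : 0 < q := by linarith
  have h1θ : 0 < 1 - θ := by linarith
  constructor
  · intro h
    set g : ℝ → ENNReal := fun t => ENNReal.ofReal |f t| with hg
    have hgm : Measurable g := by fun_prop
    set F : ℝ → ENNReal := fun x => ∫⁻ t in Ioo 0 x, g t with hF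
    have hFm : Measurable F := lmeas g
    have h' : ∫⁻ x in Ioi (0:ℝ), (F x / ENNReal.ofReal x) ^ q < ⊤ := h
    have hfin : ∀ x, F x ≠ ⊤ := lfin hq1 h'
    set s := 1 - q / p with hs
    have hqp1 : q / p < 1 := by rw [div_lt_one hp0]; exact hqp
    have hqp0 : 0 < q / p := by positivity
    have hs0 : 0 < s := by rw [hs]; linarith
    have hs1 : s < 1 := by rw [hs]; linarith
    have hFn : ∀ t, 0 ≤ (F t).toReal := fun t => ENNReal.toReal_nonneg
    refine ⟨fun t => |f t| * ((F t).toReal ^ (q - 1) * |t| ^ (1 - q)),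
      fun t => |f t| * (|t| ^ s * (F t).toReal⁻¹ ^ s), by fun_prop, by fun_prop,
      fun t => by positivity, fun t => by positivity, ?_, ?_, ?_⟩
    · have : ∫⁻ t in Ioi (0:ℝ),
          ENNReal.ofReal (|f t| * ((F t).toReal ^ (q - 1) * |t| ^ (1 - q))) =
          ∫⁻ t in Ioi (0:ℝ), g t * (F t ^ (q - 1) * ENNReal.ofReal (t ^ (1 - q))) := by
        refine setLIntegral_congr_fun measurableSet_Ioi fun t ht => ?_
        have ht0 : (0:ℝ) < t := ht
        beta_reduce
        rw [ENNReal.ofReal_mul (abs_nonneg _), ENNReal.ofReal_mul (by positivity),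
          ← ENNReal.ofReal_rpow_of_nonneg (hFn t) (by linarith), ENNReal.ofReal_toReal (hfin t),
          abs_of_pos ht0]
      rw [this]
      exact (lF0 hgm hq1).trans_lt (ENNReal.mul_lt_top ENNReal.ofReal_lt_top h')
    · unfold memCes
      have key : ∀ x ∈ Ioi (0:ℝ), cesE (fun t => |f t| * (|t| ^ s * (F t).toReal⁻¹ ^ s)) x ^ p ≤
          ENNReal.ofReal (1 / (1 - s)) ^ p * (F x / ENNReal.ofReal x) ^ q := by
        intro x hx
        have hx0 : (0:ℝ) < x := hx
        have hb : ∫⁻ t in Ioo 0 x, ENNReal.ofReal (|f t| * (|t| ^ s * (F t).toReal⁻¹ ^ s)) ≤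
            ENNReal.ofReal (x ^ s) * (ENNReal.ofReal (1 / (1 - s)) * F x ^ (1 - s)) := by
          refine le_trans ?_ (mul_le_mul_right (lL hgm hs0 hs1 (hfin x)) _)
          rw [← lintegral_const_mul' _ _ ENNReal.ofReal_ne_top]
          refine setLIntegral_mono' measurableSet_Ioo fun t ht => ?_
          rw [ENNReal.ofReal_mul (abs_nonneg _), ENNReal.ofReal_mul (by positivity), mul_left_comm]
          gcongr
          rw [abs_of_pos ht.1]; exact ht.2.le
        have hc : cesE (fun t => |f t| * (|t| ^ s * (F t).toReal⁻¹ ^ s)) x ≤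
            ENNReal.ofReal (1 / (1 - s)) * (F x / ENNReal.ofReal x) ^ (1 - s) := by
          unfold cesE
          rw [ldiv _ hx0, ldiv _ hx0]
          refine (mul_le_mul_left hb _).trans (le_of_eq ?_)
          rw [ENNReal.mul_rpow_of_nonneg _ _ (by linarith),
            ENNReal.ofReal_rpow_of_pos (by positivity), mul_comm, ← mul_assoc,
            ← ENNReal.ofReal_mul (by positivity), mul_left_comm, mul_comm (ENNReal.ofReal _) (F x ^ _)]
          congr 4
          rw [Real.inv_rpow hx0.le, ← Real.rpow_neg hx0.le, ← Real.rpow_neg_one x,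
            ← Real.rpow_add hx0]
          congr 1; ring
        refine (ENNReal.rpow_le_rpow hc hp0.le).trans (le_of_eq ?_)
        rw [ENNReal.mul_rpow_of_nonneg _ _ hp0.le, ← ENNReal.rpow_mul]
        congr 2
        rw [hs]; field_simp; ring
      refine (setLIntegral_mono' measurableSet_Ioi key).trans_lt ?_
      have hcst : ENNReal.ofReal (1 / (1 - s)) ^ p ≠ ⊤ :=
        (ENNReal.rpow_lt_top_of_nonneg hp0.le ENNReal.ofReal_ne_top).ne
      rw [lintegral_const_mul' _ _ hcst]
      exact ENNReal.mul_lt_top hcst.lt_top h'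
    · -- pointwise bound
      have hnull : ∫⁻ t in {t : ℝ | 0 < t ∧ F t ≤ 0}, g t = 0 := le_antisymm (lsub g 0) zero_le
      have hmS : MeasurableSet {t : ℝ | 0 < t ∧ F t ≤ 0} :=
        (measurableSet_lt measurable_const measurable_id).inter
          (measurableSet_le hFm measurable_const)
      rw [lintegral_eq_zero_iff hgm, Filter.EventuallyEq, ae_restrict_iff' hmS] at hnull
      rw [ae_restrict_iff' measurableSet_Ioi]
      filter_upwards [hnull] with t ht ht0
      have ht0' : (0:ℝ) < t := ht0
      by_cases h0 : F t ≤ 0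
      · have : g t = 0 := ht ⟨ht0', h0⟩
        have hft : |f t| = 0 := le_antisymm (ENNReal.ofReal_eq_zero.1 this) (abs_nonneg _)
        rw [hft]; positivity
      · have hFt : 0 < (F t).toReal := ENNReal.toReal_pos (fun h => h0 h.le) (hfin t)
        set m := (F t).toReal with hm
        rw [abs_of_pos ht0', Real.inv_rpow hFt.le, ← Real.rpow_neg hFt.le,
          Real.mul_rpow (abs_nonneg _) (by positivity),
          Real.mul_rpow (abs_nonneg _) (by positivity), mul_mul_mul_comm,
          ← Real.rpow_add_of_nonneg (abs_nonneg _) h1θ.le hθ0.le,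
          Real.mul_rpow (by positivity) (by positivity),
          Real.mul_rpow (by positivity) (by positivity), ← Real.rpow_mul hFt.le,
          ← Real.rpow_mul hFt.le, ← Real.rpow_mul ht0'.le, ← Real.rpow_mul ht0'.le,
          mul_comm (t ^ (s * θ)), mul_mul_mul_comm, ← Real.rpow_add hFt, ← Real.rpow_add ht0']
        have e1 : (q - 1) * (1 - θ) + -s * θ = 0 := by
          rw [hs]; linear_combination hsum
        have e2 : (1 - q) * (1 - θ) + s * θ = 0 := by linear_combination -e1
        rw [e1, e2]
        simp
  · rintro ⟨f₀, f₁, hf₀, hf₁, h₀, h₁, hi₀, hi₁, hle⟩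
    refine lBack hp hθ0 hθ1 hq (g := fun t => ENNReal.ofReal |f t|)
      (a := fun t => ENNReal.ofReal (f₀ t)) (b := fun t => ENNReal.ofReal (f₁ t))
      (by fun_prop) (by fun_prop) ?_ hi₀.ne hi₁.ne
    filter_upwards [hle] with x hx
    rw [ENNReal.ofReal_rpow_of_nonneg (h₀ x) h1θ.le, ENNReal.ofReal_rpow_of_nonneg (h₁ x) hθ0.le,
      ← ENNReal.ofReal_mul (Real.rpow_nonneg (h₀ x) _)]
    exact ENNReal.ofReal_le_ofReal hx
end
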